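/- Let ϑ = (ϑ₁, ϑ₂, ϑ₃) ∈ (0,1)³. There exists a nondegenerate spherical triangle, i.e. linearly independent unit vectors x₁, x₂, x₃ in ℝ³, whose angle at the vertex xᵢ equals π·ϑᵢ for i = 1,2,3, if and only if ϑ satisfies the strict holonomy constraint d₁(ϑ − 𝟙, ℤ³_odd) > 1. -/

import Mathlib

/-!
The proof passes through the quantity `polarGram a b c = 1 - a² - b² - c² - 2abc`, where `a, b, c`
are the cosines of the three angles; it is the Gram determinant of the outer unit normals of the
sides of the triangle.

* A triangle with angles `A, B, C ∈ (0, π)` exists iff `polarGram` is positive. By the spherical law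
  of cosines, `polarGram` is the squared Gram determinant of the vertices over a positive product
  (`polarGram_pos_of_triangle`); conversely, when it is positive, the dual law of cosines prescribes
  the sides, and the triangle can be written down in coordinates (`exists_triangle`).
* `polarGram` factors into cosines of half-sums of the angles, hence is positive iff
  `A + B + C > π`, `B + C < A + π` and its two cyclic analogues hold (`polarGram_cos_pos_iff`).
* The holonomy constraint is the same system of four inequalities: they compare with `1` the
  ℓ¹-distances from `ϑ - 𝟙` to the four odd vertices of the cube `[-1,0]³` (`one_lt_d1_iff`).
-/

open scoped RealInnerProductSpace

noncomputable section

/-- Euclidean 3-space. -/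
abbrev E3 := EuclideanSpace ℝ (Fin 3)

/-- The angle of a spherical triangle at the vertex `p`, towards the vertices `q` and `r`:
the angle between the tangent directions at `p` towards `q` and `r`. -/
def sphericalAngle (p q r : E3) : ℝ :=
  InnerProductGeometry.angle (q - ⟪q, p⟫ • p) (r - ⟪r, p⟫ • p)

/-- The ℓ¹-distance from a point `v ∈ ℝ³` to a subset `A ⊆ ℝ³`. -/
def d1 (v : Fin 3 → ℝ) (A : Set (Fin 3 → ℝ)) : ℝ :=
  sInf ((fun a => ∑ i, |v i - a i|) '' A)

/-- The set `ℤ³_odd` of integer vectors in `ℝ³` with odd coordinate sum. -/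
def Z3odd : Set (Fin 3 → ℝ) :=
  {a | ∃ m : Fin 3 → ℤ, (∀ i, a i = m i) ∧ Odd (m 0 + m 1 + m 2)}

/-- With `a, b, c` the cosines of `A, B, C`, the Gram determinant of the outer unit normals of a
spherical triangle with angles `A, B, C`. -/
def polarGram (a b c : ℝ) : ℝ := 1 - a ^ 2 - b ^ 2 - c ^ 2 - 2 * a * b * c

lemma polarGram_cos (A B C : ℝ) :
    polarGram (Real.cos A) (Real.cos B) (Real.cos C) =
      -4 * (Real.cos ((A + B + C) / 2) * Real.cos ((B + C - A) / 2)) *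
        (Real.cos ((C + A - B) / 2) * Real.cos ((A + B - C) / 2)) := by
  have h1 : 2 * (Real.cos ((A + B + C) / 2) * Real.cos ((B + C - A) / 2)) =
      Real.cos A + Real.cos (B + C) := by
    rw [← mul_assoc, Real.two_mul_cos_mul_cos]
    ring_nf
  have h2 : 2 * (Real.cos ((C + A - B) / 2) * Real.cos ((A + B - C) / 2)) =
      Real.cos A + Real.cos (B - C) := by
    rw [← mul_assoc, Real.two_mul_cos_mul_cos, add_comm, ← Real.cos_neg (B - C)]
    ring_nf
  have h3 : -4 * (Real.cos ((A + B + C) / 2) * Real.cos ((B + C - A) / 2)) *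
        (Real.cos ((C + A - B) / 2) * Real.cos ((A + B - C) / 2)) =
      -((Real.cos A + Real.cos (B + C)) * (Real.cos A + Real.cos (B - C))) := by
    rw [← h1, ← h2]; ring
  rw [h3, Real.cos_add, Real.cos_sub, polarGram]
  linear_combination (-1 + Real.cos B ^ 2) * Real.sin_sq_add_cos_sq C
    - Real.sin C ^ 2 * Real.sin_sq_add_cos_sq B

/-- At most one of the four half-angle cosines in `polarGram_cos` can have the wrong sign, so
positivity of the product forces the correct sign on every factor. -/
lemma polarGram_cos_pos_iff {A B C : ℝ} (hA : A ∈ Set.Ioo 0 Real.pi) (hB : B ∈ Set.Ioo 0 Real.pi)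
    (hC : C ∈ Set.Ioo 0 Real.pi) :
    0 < polarGram (Real.cos A) (Real.cos B) (Real.cos C) ↔
      Real.pi < A + B + C ∧ B + C < A + Real.pi ∧ C + A < B + Real.pi ∧ A + B < C + Real.pi := by
  obtain ⟨hA0, hA1⟩ := hA
  obtain ⟨hB0, hB1⟩ := hB
  obtain ⟨hC0, hC1⟩ := hC
  rw [polarGram_cos]
  have pos : ∀ t : ℝ, -Real.pi < t → t < Real.pi → 0 < Real.cos (t / 2) := fun t h h' =>
    Real.cos_pos_of_mem_Ioo ⟨by linarith, by linarith⟩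
  have npos : ∀ t : ℝ, Real.pi ≤ t → t ≤ 3 * Real.pi → Real.cos (t / 2) ≤ 0 := fun t h h' =>
    Real.cos_nonpos_of_pi_div_two_le_of_le (by linarith) (by linarith)
  have neg : ∀ t : ℝ, Real.pi < t → t < 3 * Real.pi → Real.cos (t / 2) < 0 := fun t h h' =>
    Real.cos_neg_of_pi_div_two_lt_of_lt (by linarith) (by linarith)
  have key : ∀ w x y z : ℝ, -4 * (w * x) * (y * z) = 4 * ((-w) * x * y * z) := by
    intros; ring
  rw [key]
  constructor
  · intro h
    by_contra hne
    refine absurd h (not_lt.mpr ?_)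
    by_cases h0 : Real.pi < A + B + C
    · have p0 := neg (A + B + C) h0 (by linarith)
      by_cases h1 : B + C < A + Real.pi
      · have p1 := pos (B + C - A) (by linarith) (by linarith)
        by_cases h2 : C + A < B + Real.pi
        · have p2 := pos (C + A - B) (by linarith) (by linarith)
          have p3 := npos (A + B - C) (by
            by_contra h3; exact hne ⟨h0, h1, h2, by linarith⟩) (by linarith)
          have : 0 < (-Real.cos ((A + B + C) / 2)) * Real.cos ((B + C - A) / 2) *
            Real.cos ((C + A - B) / 2) := mul_pos (mul_pos (by linarith) p1) p2
          linarith [mul_nonpos_of_nonneg_of_nonpos this.le p3]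
        · have p2 := npos (C + A - B) (by linarith) (by linarith)
          have p3 := pos (A + B - C) (by linarith) (by linarith)
          have : 0 < (-Real.cos ((A + B + C) / 2)) * Real.cos ((B + C - A) / 2) *
            Real.cos ((A + B - C) / 2) := mul_pos (mul_pos (by linarith) p1) p3
          linarith [mul_nonpos_of_nonneg_of_nonpos this.le p2]
      · have p1 := npos (B + C - A) (by linarith) (by linarith)
        have p2 := pos (C + A - B) (by linarith) (by linarith)
        have p3 := pos (A + B - C) (by linarith) (by linarith)
        have : 0 < (-Real.cos ((A + B + C) / 2)) * Real.cos ((C + A - B) / 2) *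
          Real.cos ((A + B - C) / 2) := mul_pos (mul_pos (by linarith) p2) p3
        linarith [mul_nonpos_of_nonneg_of_nonpos this.le p1]
    · have p0 : 0 ≤ Real.cos ((A + B + C) / 2) :=
        Real.cos_nonneg_of_mem_Icc ⟨by linarith, by linarith⟩
      have p1 := pos (B + C - A) (by linarith) (by linarith)
      have p2 := pos (C + A - B) (by linarith) (by linarith)
      have p3 := pos (A + B - C) (by linarith) (by linarith)
      have := mul_nonneg (mul_nonneg (mul_nonneg p0 p1.le) p2.le) p3.le
      linarith
  · rintro ⟨h0, h1, h2, h3⟩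
    have p0 := neg (A + B + C) h0 (by linarith)
    have p1 := pos (B + C - A) (by linarith) (by linarith)
    have p2 := pos (C + A - B) (by linarith) (by linarith)
    have p3 := pos (A + B - C) (by linarith) (by linarith)
    have : 0 < -Real.cos ((A + B + C) / 2) := by linarith
    positivity

/-- For `ϑ ∈ (0,1)³` only the odd vertices `(-1,-1,-1)`, `(-1,0,0)`, `(0,-1,0)`, `(0,0,-1)` of the
cube `[-1,0]³` matter: any other odd lattice point is at least as far from `ϑ - 𝟙` as one of
these four. -/
lemma one_lt_d1_iff (ϑ : Fin 3 → ℝ) (hϑ : ∀ i, ϑ i ∈ Set.Ioo (0 : ℝ) 1) :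
    1 < d1 (fun i => ϑ i - 1) Z3odd ↔
      1 < ϑ 0 + ϑ 1 + ϑ 2 ∧ ϑ 1 + ϑ 2 < ϑ 0 + 1 ∧ ϑ 2 + ϑ 0 < ϑ 1 + 1 ∧
        ϑ 0 + ϑ 1 < ϑ 2 + 1 := by
  obtain ⟨h00, h01⟩ := hϑ 0
  obtain ⟨h10, h11⟩ := hϑ 1
  obtain ⟨h20, h21⟩ := hϑ 2
  have hbdd : BddBelow ((fun a : Fin 3 → ℝ => ∑ i, |(ϑ i - 1) - a i|) '' Z3odd) :=
    ⟨0, by rintro _ ⟨a, -, rfl⟩; exact Finset.sum_nonneg fun i _ => abs_nonneg _⟩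
  have up : ∀ m : Fin 3 → ℤ, Odd (m 0 + m 1 + m 2) → 1 < d1 (fun i => ϑ i - 1) Z3odd →
      1 < |ϑ 0 - 1 - m 0| + |ϑ 1 - 1 - m 1| + |ϑ 2 - 1 - m 2| := by
    intro m hm h
    have := csInf_le hbdd ⟨fun i => (m i : ℝ), ⟨m, fun _ => rfl, hm⟩, rfl⟩
    have h' := lt_of_lt_of_le h this
    simpa only [Fin.sum_univ_three] using h'
  constructor
  · intro h
    have e0 := up ![-1, -1, -1] (by decide) h
    have e1 := up ![-1, 0, 0] (by decide) h
    have e2 := up ![0, -1, 0] (by decide) h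
    have e3 := up ![0, 0, -1] (by decide) h
    simp at e0 e1 e2 e3
    rw [abs_of_pos h00, abs_of_pos h10, abs_of_pos h20] at e0
    rw [abs_of_pos h00, abs_of_neg (by linarith : ϑ 1 - 1 < 0),
      abs_of_neg (by linarith : ϑ 2 - 1 < 0)] at e1
    rw [abs_of_pos h10, abs_of_neg (by linarith : ϑ 0 - 1 < 0),
      abs_of_neg (by linarith : ϑ 2 - 1 < 0)] at e2
    rw [abs_of_pos h20, abs_of_neg (by linarith : ϑ 0 - 1 < 0),
      abs_of_neg (by linarith : ϑ 1 - 1 < 0)] at e3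
    refine ⟨by linarith, by linarith, by linarith, by linarith⟩
  · rintro ⟨h0, h1, h2, h3⟩
    -- The smallest of the four vertex distances, a lower bound for all the distances.
    set K := min (min (ϑ 0 + ϑ 1 + ϑ 2) (ϑ 0 + 2 - ϑ 1 - ϑ 2))
      (min (ϑ 1 + 2 - ϑ 2 - ϑ 0) (ϑ 2 + 2 - ϑ 0 - ϑ 1)) with hK
    have hK1 : 1 < K := by
      simp only [hK, lt_min_iff]
      exact ⟨⟨h0, by linarith⟩, by linarith, by linarith⟩
    have k0 : K ≤ ϑ 0 + ϑ 1 + ϑ 2 := (min_le_left _ _).trans (min_le_left _ _)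
    have k1 : K ≤ ϑ 0 + 2 - ϑ 1 - ϑ 2 := (min_le_left _ _).trans (min_le_right _ _)
    have k2 : K ≤ ϑ 1 + 2 - ϑ 2 - ϑ 0 := (min_le_right _ _).trans (min_le_left _ _)
    have k3 : K ≤ ϑ 2 + 2 - ϑ 0 - ϑ 1 := (min_le_right _ _).trans (min_le_right _ _)
    clear_value K
    refine hK1.trans_le (le_csInf ?_ ?_)
    · exact ⟨_, ⟨_, ⟨![1, 0, 0], fun _ => rfl, by decide⟩, rfl⟩⟩
    · rintro _ ⟨a, ⟨m, hm, hodd⟩, rfl⟩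
      simp only [Fin.sum_univ_three, hm]
      -- Clip an integer to `{0, -1}`, recording how far it moves.
      have clip : ∀ (t : ℝ) (n : ℤ), 0 < t → t < 1 →
          (∃ k : ℕ, n = k ∧ 1 - t + k ≤ |t - 1 - n|) ∨
          (∃ k : ℕ, n = -1 - k ∧ t + k ≤ |t - 1 - n|) := by
        intro t n ht0 ht1
        rcases le_or_gt 0 n with hn | hn
        · obtain ⟨k, rfl⟩ := Int.eq_ofNat_of_zero_le hn
          refine Or.inl ⟨k, rfl, ?_⟩
          have := neg_le_abs (t - 1 - ((k : ℤ) : ℝ))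
          push_cast at this ⊢
          linarith
        · obtain ⟨k, hk⟩ := Int.eq_ofNat_of_zero_le (by omega : 0 ≤ -1 - n)
          have hn' : n = -1 - k := by omega
          refine Or.inr ⟨k, hn', ?_⟩
          have := le_abs_self (t - 1 - (n : ℝ))
          rw [hn'] at this ⊢
          push_cast at this ⊢
          linarith
      have tot : ∀ k l j : ℕ, (k + l + j = 0) ∨ (1 : ℝ) ≤ k + l + j := by
        intro k l j
        rcases Nat.eq_zero_or_pos (k + l + j) with h | h
        · exact Or.inl h
        · right; exact_mod_cast h
      have nn : ∀ k : ℕ, (0 : ℝ) ≤ k := fun k => Nat.cast_nonneg k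
      rw [Int.odd_iff] at hodd
      rcases clip _ (m 0) h00 h01 with ⟨k, hk, hk'⟩ | ⟨k, hk, hk'⟩ <;>
      rcases clip _ (m 1) h10 h11 with ⟨l, hl, hl'⟩ | ⟨l, hl, hl'⟩ <;>
      rcases clip _ (m 2) h20 h21 with ⟨j, hj, hj'⟩ | ⟨j, hj, hj'⟩ <;>
      rcases tot k l j with h | h <;>
      first
      | (exfalso; omega)
      | linarith [nn k, nn l, nn j]

/-- The spherical law of cosines, solved for the angle. -/
lemma cos_sphericalAngle {x y z : E3} (hx : ‖x‖ = 1) (hy : ‖y‖ = 1) (hz : ‖z‖ = 1) :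
    Real.cos (sphericalAngle x y z) = (⟪y, z⟫ - ⟪x, y⟫ * ⟪z, x⟫) /
      (√(1 - ⟪x, y⟫ ^ 2) * √(1 - ⟪z, x⟫ ^ 2)) := by
  have hin : ∀ y z : E3, ⟪y - ⟪y, x⟫ • x, z - ⟪z, x⟫ • x⟫ = ⟪y, z⟫ - ⟪y, x⟫ * ⟪z, x⟫ := by
    intro y z
    simp only [inner_sub_left, inner_sub_right, real_inner_smul_left, real_inner_smul_right,
      real_inner_self_eq_norm_sq, hx]
    rw [real_inner_comm z x]
    ring
  have hnorm : ∀ y : E3, ‖y‖ = 1 → ‖y - ⟪y, x⟫ • x‖ = √(1 - ⟪y, x⟫ ^ 2) := by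
    intro y hy
    rw [norm_eq_sqrt_real_inner, hin, real_inner_self_eq_norm_sq, hy]
    ring_nf
  rw [sphericalAngle, InnerProductGeometry.cos_angle, hin, hnorm y hy, hnorm z hz,
    real_inner_comm x y]

lemma sphericalAngle_eq_arccos {x y z : E3} (hx : ‖x‖ = 1) (hy : ‖y‖ = 1) (hz : ‖z‖ = 1) :
    sphericalAngle x y z = Real.arccos ((⟪y, z⟫ - ⟪x, y⟫ * ⟪z, x⟫) /
      (√(1 - ⟪x, y⟫ ^ 2) * √(1 - ⟪z, x⟫ ^ 2))) := by
  rw [← cos_sphericalAngle hx hy hz]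
  exact (Real.arccos_cos (InnerProductGeometry.angle_nonneg _ _)
    (InnerProductGeometry.angle_le_pi _ _)).symm

/-- The polar Gram determinant is a positive multiple of the square of the Gram determinant of the
vertices. -/
lemma polarGram_of_sides {p q r : ℝ} (hp : 0 < 1 - p ^ 2) (hq : 0 < 1 - q ^ 2)
    (hr : 0 < 1 - r ^ 2) (hD : 0 < 1 - p ^ 2 - q ^ 2 - r ^ 2 + 2 * p * q * r) :
    0 < polarGram ((p - r * q) / (√(1 - r ^ 2) * √(1 - q ^ 2)))
      ((q - p * r) / (√(1 - p ^ 2) * √(1 - r ^ 2)))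
      ((r - q * p) / (√(1 - q ^ 2) * √(1 - p ^ 2))) := by
  have hP := Real.sqrt_pos.mpr hp
  have hQ := Real.sqrt_pos.mpr hq
  have hR := Real.sqrt_pos.mpr hr
  have sP := Real.sq_sqrt hp.le
  have sQ := Real.sq_sqrt hq.le
  have sR := Real.sq_sqrt hr.le
  generalize √(1 - p ^ 2) = P at *
  generalize √(1 - q ^ 2) = Q at *
  generalize √(1 - r ^ 2) = R at *
  have : polarGram ((p - r * q) / (R * Q)) ((q - p * r) / (P * R)) ((r - q * p) / (Q * P)) =
      (1 - p ^ 2 - q ^ 2 - r ^ 2 + 2 * p * q * r) ^ 2 / (P ^ 2 * Q ^ 2 * R ^ 2) := by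
    have e : polarGram ((p - r * q) / (R * Q)) ((q - p * r) / (P * R)) ((r - q * p) / (Q * P)) =
        (P ^ 2 * Q ^ 2 * R ^ 2 - (p - r * q) ^ 2 * P ^ 2 - (q - p * r) ^ 2 * Q ^ 2
          - (r - q * p) ^ 2 * R ^ 2 - 2 * (p - r * q) * (q - p * r) * (r - q * p)) /
          (P ^ 2 * Q ^ 2 * R ^ 2) := by
      rw [polarGram]
      field_simp
    rw [e, sP, sQ, sR]
    congr 1
    ring
  rw [this]
  positivity

/-- The Gram determinants of a linearly independent triple of unit vectors and of its pairs are
positive. -/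
lemma gram_pos {x : Fin 3 → E3} (hx : LinearIndependent ℝ x) (hn : ∀ i, ‖x i‖ = 1) :
    0 < 1 - ⟪x 1, x 2⟫ ^ 2 - ⟪x 2, x 0⟫ ^ 2 - ⟪x 0, x 1⟫ ^ 2
        + 2 * ⟪x 1, x 2⟫ * ⟪x 2, x 0⟫ * ⟪x 0, x 1⟫ ∧
      ∀ i j, i ≠ j → 0 < 1 - ⟪x i, x j⟫ ^ 2 := by
  constructor
  · have h := (Matrix.posDef_gram_of_linearIndependent (𝕜 := ℝ) hx).det_pos
    rw [Matrix.det_fin_three] at h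
    simp only [Matrix.gram_apply, real_inner_self_eq_norm_sq, hn] at h
    rw [real_inner_comm (x 0) (x 1), real_inner_comm (x 1) (x 2), real_inner_comm (x 2) (x 0)]
      at h
    linarith
  · intro i j hij
    have hinj : Function.Injective ![i, j] := by
      intro k l hkl
      fin_cases k <;> fin_cases l <;> simp_all
    have h := (Matrix.posDef_gram_of_linearIndependent (𝕜 := ℝ) (hx.comp _ hinj)).det_pos
    rw [Matrix.det_fin_two] at h
    simp [Matrix.gram_apply, hn] at h
    rw [real_inner_comm (x i) (x j)] at h
    linarith

/-- Existence: one vertex is placed at the first basis vector and a second one in the plane of the first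
two; the cosines of the sides are those prescribed by the dual law of cosines. -/
lemma exists_triangle {A B C : ℝ} (hA : A ∈ Set.Ioo 0 Real.pi) (hB : B ∈ Set.Ioo 0 Real.pi)
    (hC : C ∈ Set.Ioo 0 Real.pi)
    (hD : 0 < polarGram (Real.cos A) (Real.cos B) (Real.cos C)) :
    ∃ x : Fin 3 → E3, LinearIndependent ℝ x ∧ (∀ i, ‖x i‖ = 1) ∧
      sphericalAngle (x 0) (x 1) (x 2) = A ∧ sphericalAngle (x 1) (x 2) (x 0) = B ∧
      sphericalAngle (x 2) (x 0) (x 1) = C := by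
  have eA := Real.arccos_cos hA.1.le hA.2.le
  have eB := Real.arccos_cos hB.1.le hB.2.le
  have eC := Real.arccos_cos hC.1.le hC.2.le
  have sA := Real.sin_pos_of_mem_Ioo hA
  have sB := Real.sin_pos_of_mem_Ioo hB
  have sC := Real.sin_pos_of_mem_Ioo hC
  have qA := Real.sin_sq A
  have qB := Real.sin_sq B
  have qC := Real.sin_sq C
  generalize Real.cos A = a at *
  generalize Real.cos B = b at *
  generalize Real.cos C = c at *
  generalize Real.sin A = s at *
  generalize Real.sin B = t at *
  generalize Real.sin C = u at *
  obtain ⟨d, hd, hd2⟩ : ∃ d : ℝ, 0 < d ∧ d ^ 2 = polarGram a b c :=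
    ⟨_, Real.sqrt_pos.mpr hD, Real.sq_sqrt hD.le⟩
  rw [polarGram] at hd2
  -- `p, q, r` are the cosines of the sides opposite to `A, B, C`, and `P, Q, R` their sines.
  obtain ⟨p, hp⟩ : ∃ p, p = (a + b * c) / (t * u) := ⟨_, rfl⟩
  obtain ⟨q, hq⟩ : ∃ q, q = (b + c * a) / (u * s) := ⟨_, rfl⟩
  obtain ⟨r, hr⟩ : ∃ r, r = (c + a * b) / (s * t) := ⟨_, rfl⟩
  obtain ⟨P, hP⟩ : ∃ P, P = d / (t * u) := ⟨_, rfl⟩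
  obtain ⟨Q, hQ⟩ : ∃ Q, Q = d / (u * s) := ⟨_, rfl⟩
  obtain ⟨R, hR⟩ : ∃ R, R = d / (s * t) := ⟨_, rfl⟩
  have P0 : 0 < P := by rw [hP]; positivity
  have Q0 : 0 < Q := by rw [hQ]; positivity
  have R0 : 0 < R := by rw [hR]; positivity
  have pyth : ∀ {a b c d t u : ℝ}, 0 < t → 0 < u → t ^ 2 = 1 - b ^ 2 → u ^ 2 = 1 - c ^ 2 →
      d ^ 2 = 1 - a ^ 2 - b ^ 2 - c ^ 2 - 2 * a * b * c →
      1 - ((a + b * c) / (t * u)) ^ 2 = (d / (t * u)) ^ 2 := by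
    intro a b c d t u ht hu ht2 hu2 hd2
    rw [div_pow, div_pow, mul_pow, ht2, hu2, hd2]
    have h1 : 1 - b ^ 2 ≠ 0 := by rw [← ht2]; positivity
    have h2 : 1 - c ^ 2 ≠ 0 := by rw [← hu2]; positivity
    field_simp
    ring
  have p2 : 1 - p ^ 2 = P ^ 2 := by
    rw [hp, hP]; exact pyth sB sC qB qC hd2
  have q2 : 1 - q ^ 2 = Q ^ 2 := by
    rw [hq, hQ]; exact pyth sC sA qC qA (by linarith)
  have r2 : 1 - r ^ 2 = R ^ 2 := by
    rw [hr, hR]; exact pyth sA sB qA qB (by linarith)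
  have law : ∀ {a b c d s t u : ℝ}, 0 < s → 0 < t → 0 < u → s ^ 2 = 1 - a ^ 2 →
      d ^ 2 = 1 - a ^ 2 - b ^ 2 - c ^ 2 - 2 * a * b * c →
      (a + b * c) / (t * u) - (c + a * b) / (s * t) * ((b + c * a) / (u * s)) =
        a * (d / (s * t) * (d / (u * s))) := by
    intro a b c d s t u hs ht hu hs2 hd2
    field_simp
    rw [hs2, hd2]
    ring
  have lA : p - r * q = a * (R * Q) := by
    rw [hp, hq, hr, hR, hQ]; exact law sA sB sC qA hd2
  have lB : q - p * r = b * (P * R) := by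
    rw [hp, hq, hr, hR, hP]; exact law sB sC sA qB (by linarith)
  have lC : r - q * p = c * (Q * P) := by
    rw [hp, hq, hr, hP, hQ]; exact law sC sA sB qC (by linarith)
  clear hp hq hr hP hQ hR
  have i01 : ⟪(!₂[1, 0, 0] : E3), !₂[r, R, 0]⟫ = r := by
    simp [PiLp.inner_apply, Fin.sum_univ_three]
  have i20 : ⟪(!₂[q, Q * a, Q * s] : E3), !₂[1, 0, 0]⟫ = q := by
    simp [PiLp.inner_apply, Fin.sum_univ_three]
  have i12 : ⟪(!₂[r, R, 0] : E3), !₂[q, Q * a, Q * s]⟫ = p := by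
    simp [PiLp.inner_apply, Fin.sum_univ_three]
    linarith
  have n0 : ‖(!₂[1, 0, 0] : E3)‖ = 1 := by
    simp [EuclideanSpace.norm_eq, Fin.sum_univ_three]
  have n1 : ‖(!₂[r, R, 0] : E3)‖ = 1 := by
    simp [EuclideanSpace.norm_eq, Fin.sum_univ_three]
    linarith
  have n2 : ‖(!₂[q, Q * a, Q * s] : E3)‖ = 1 := by
    simp [EuclideanSpace.norm_eq, Fin.sum_univ_three]
    linear_combination (-1 : ℝ) * q2 + Q ^ 2 * qA
  refine ⟨![!₂[1, 0, 0], !₂[r, R, 0], !₂[q, Q * a, Q * s]], ?_, ?_, ?_, ?_, ?_⟩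
  · rw [Fintype.linearIndependent_iff]
    intro g hg
    rw [Fin.sum_univ_three] at hg
    have g0 := congrArg (fun v : E3 => v 0) hg
    have g1 := congrArg (fun v : E3 => v 1) hg
    have g2 := congrArg (fun v : E3 => v 2) hg
    simp [Q0.ne', sA.ne'] at g0 g1 g2
    simp [g2, R0.ne'] at g1
    simp [g1, g2] at g0
    intro i
    fin_cases i <;> assumption
  · intro i
    fin_cases i
    · exact n0
    · exact n1
    · exact n2
  · change sphericalAngle !₂[1, 0, 0] !₂[r, R, 0] !₂[q, Q * a, Q * s] = A
    rw [sphericalAngle_eq_arccos n0 n1 n2, i12, i01, i20, r2, q2,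
      Real.sqrt_sq R0.le, Real.sqrt_sq Q0.le, lA, mul_div_cancel_right₀ _ (by positivity), eA]
  · change sphericalAngle !₂[r, R, 0] !₂[q, Q * a, Q * s] !₂[1, 0, 0] = B
    rw [sphericalAngle_eq_arccos n1 n2 n0, i20, i12, i01, p2, r2,
      Real.sqrt_sq P0.le, Real.sqrt_sq R0.le, lB, mul_div_cancel_right₀ _ (by positivity), eB]
  · change sphericalAngle !₂[q, Q * a, Q * s] !₂[1, 0, 0] !₂[r, R, 0] = C
    rw [sphericalAngle_eq_arccos n2 n0 n1, i01, i20, i12, q2, p2,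
      Real.sqrt_sq Q0.le, Real.sqrt_sq P0.le, lC, mul_div_cancel_right₀ _ (by positivity), eC]

/-- Necessity: the angles are arccosines of the quotients in the law of cosines, to which
`polarGram_of_sides` applies. -/
lemma polarGram_pos_of_triangle {x : Fin 3 → E3} (hx : LinearIndependent ℝ x)
    (hn : ∀ i, ‖x i‖ = 1) :
    0 < polarGram (Real.cos (sphericalAngle (x 0) (x 1) (x 2)))
      (Real.cos (sphericalAngle (x 1) (x 2) (x 0)))
      (Real.cos (sphericalAngle (x 2) (x 0) (x 1))) := by
  obtain ⟨hD, hpair⟩ := gram_pos hx hn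
  rw [cos_sphericalAngle (hn 0) (hn 1) (hn 2), cos_sphericalAngle (hn 1) (hn 2) (hn 0),
    cos_sphericalAngle (hn 2) (hn 0) (hn 1)]
  exact polarGram_of_sides (hpair 1 2 (by decide)) (hpair 2 0 (by decide))
    (hpair 0 1 (by decide)) hD

/-- **Existence of convex spherical triangles via the holonomy constraint.**
For `ϑ ∈ (0,1)³`, a nondegenerate spherical triangle with angles `π·ϑᵢ` exists
iff `d₁(ϑ - 𝟙, ℤ³_odd) > 1`. -/
theorem exists_convex_spherical_triangle_iff_holonomy (ϑ : Fin 3 → ℝ)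
    (hϑ : ∀ i, ϑ i ∈ Set.Ioo (0 : ℝ) 1) :
    (∃ x : Fin 3 → E3, LinearIndependent ℝ x ∧ (∀ i, ‖x i‖ = 1) ∧
        ∀ i : Fin 3, sphericalAngle (x i) (x (i + 1)) (x (i + 2)) = Real.pi * ϑ i) ↔
      1 < d1 (fun i => ϑ i - 1) Z3odd := by
  have hang : ∀ i, Real.pi * ϑ i ∈ Set.Ioo 0 Real.pi := fun i =>
    ⟨mul_pos Real.pi_pos (hϑ i).1, mul_lt_of_lt_one_right Real.pi_pos (hϑ i).2⟩
  have hscale : (1 < d1 (fun i => ϑ i - 1) Z3odd) ↔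
      0 < polarGram (Real.cos (Real.pi * ϑ 0)) (Real.cos (Real.pi * ϑ 1))
        (Real.cos (Real.pi * ϑ 2)) := by
    rw [one_lt_d1_iff ϑ hϑ, polarGram_cos_pos_iff (hang 0) (hang 1) (hang 2)]
    have hlt : ∀ s t : ℝ, Real.pi * s < Real.pi * t ↔ s < t := fun s t =>
      mul_lt_mul_iff_right₀ Real.pi_pos
    rw [← hlt 1, ← hlt (ϑ 1 + ϑ 2), ← hlt (ϑ 2 + ϑ 0), ← hlt (ϑ 0 + ϑ 1)]
    simp only [mul_add, mul_one]
  rw [hscale]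
  constructor
  · rintro ⟨x, hx, hn, h⟩
    have := polarGram_pos_of_triangle hx hn
    rwa [show sphericalAngle (x 0) (x 1) (x 2) = _ from h 0,
      show sphericalAngle (x 1) (x 2) (x 0) = _ from h 1,
      show sphericalAngle (x 2) (x 0) (x 1) = _ from h 2] at this
  · intro hD
    obtain ⟨x, hx, hn, h0, h1, h2⟩ := exists_triangle (hang 0) (hang 1) (hang 2) hD
    refine ⟨x, hx, hn, fun i => ?_⟩
    fin_cases i
    · exact h0
    · exact h1
    · exact h2
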